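/- arXiv:1206.2233 — 3 statements merged into one kernel-verified Lean document; each statement's English description precedes it below -/
import Mathlib

section
/- Let M be a finitely generated FI-module over ℂ. Then each vector space M_n is finite-dimensional, and there exist polynomials p, q ∈ ℚ[t] such that the Hilbert series satisfies Σ_{n ≥ 0} dim(M_n)·t^n/n! = p(t)·e^t + q(t) as formal power series in t. -/
open CategoryTheory

structure FIObj where
  α : Type
  fin : Fintype α

instance (S : FIObj) : Fintype S.α := S.fin

def FIObj.of (α : Type) [Fintype α] : FIObj := ⟨α, inferInstance⟩

instance : Category FIObj where
  Hom S T := {f : S.α → T.α // Function.Injective f}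
  id S := ⟨id, Function.injective_id⟩
  comp f g := ⟨g.1 ∘ f.1, g.2.comp f.2⟩

/-- FI-modules over ℂ: functors from FI to ℂ-vector spaces. -/
abbrev FIMod := FIObj ⥤ ModuleCat.{0} ℂ

/-- A sub-FI-module. -/
structure FISub (M : FIMod) where
  carrier : ∀ S : FIObj, Submodule ℂ (M.obj S)
  map_mem : ∀ {S T : FIObj} (f : S ⟶ T) (x : M.obj S), x ∈ carrier S → M.map f x ∈ carrier T

/-- A finitely generated FI-module. -/
def FIMod.FG (M : FIMod) : Prop :=
  ∃ (k : ℕ) (S : Fin k → FIObj) (m : ∀ i, M.obj (S i)),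
    ∀ N : FISub M, (∀ i, m i ∈ N.carrier (S i)) → ∀ T, N.carrier T = ⊤

/-!
Let `M` be generated in degrees at most `d`, and let `b` be a finite basis of `M_d`. For `n ≥ d` the
space `M_n` is spanned by the images of the `b i` under the order embeddings `Fin d ↪o Fin n`: every
injection into `Fin n` from a set of size at most `d` factors through one. Order these images by `i`
and then lexicographically by the embedding, and call one *reducible* if it lies in the span of the
smaller ones, so that `dim M_n` is the number of irreducible ones. Pushing forward along an order
embedding preserves the order, hence reducibility. Recording an embedding by its `d + 1` gaps turns
the reducible embeddings, for each `i`, into an upper set of `ℕ^(d+1)`. By Dickson's lemma the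
slices of an upper set stabilise, so by induction the number of vectors of sum `n` outside it is
eventually polynomial in `n`. Finally, `∑ P(n) tⁿ/n! = p(t) eᵗ` for a polynomial `p`, because
`t · d/dt` preserves the shape of the right-hand side, and `q` corrects the finitely many
exceptional terms.
-/

section

open Filter Finset Polynomial

/-- Sequences agreeing with a polynomial function at all large `n`: the shape of the dimension
sequence `n ↦ dim M_n`. -/
def EventuallyPolynomial (h : ℕ → ℚ) : Prop :=
  ∃ P : ℚ[X], ∀ᶠ n : ℕ in atTop, h n = P.eval (n : ℚ)

namespace EventuallyPolynomial

variable {g h : ℕ → ℚ}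

theorem congr (hh : EventuallyPolynomial h) (hgh : g =ᶠ[atTop] h) : EventuallyPolynomial g :=
  hh.imp fun _ hP => hgh.trans hP

theorem zero : EventuallyPolynomial fun _ => 0 :=
  ⟨0, .of_forall fun _ => eval_zero.symm⟩

theorem add (hg : EventuallyPolynomial g) (hh : EventuallyPolynomial h) :
    EventuallyPolynomial fun n => g n + h n := by
  obtain ⟨P, hP⟩ := hg
  obtain ⟨Q, hQ⟩ := hh
  refine ⟨P + Q, ?_⟩
  filter_upwards [hP, hQ] with n hPn hQn
  rw [hPn, hQn, eval_add]

theorem sum {ι : Type*} {s : Finset ι} {f : ι → ℕ → ℚ}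
    (hf : ∀ i ∈ s, EventuallyPolynomial (f i)) :
    EventuallyPolynomial fun n => ∑ i ∈ s, f i n := by
  have := Finset.sum_induction f EventuallyPolynomial (fun _ _ => add) zero hf
  simpa only [Finset.sum_fn] using this

theorem comp_add_iff (d : ℕ) :
    EventuallyPolynomial (fun n => h (n + d)) ↔ EventuallyPolynomial h := by
  constructor <;> rintro ⟨P, hP⟩
  · refine ⟨P.comp (X - C (d : ℚ)), ?_⟩
    rw [← map_add_atTop_eq_nat d, eventually_map]
    filter_upwards [hP] with n hn
    simp [hn]
  · refine ⟨P.comp (X + C (d : ℚ)), ?_⟩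
    rw [← map_add_atTop_eq_nat d, eventually_map] at hP
    filter_upwards [hP] with n hn
    simp [hn]

end EventuallyPolynomial

theorem exists_eval_add_one_eq_eval_add (P : ℚ[X]) :
    ∃ Q : ℚ[X], ∀ x, Q.eval (x + 1) = Q.eval x + P.eval x := by
  induction P using Polynomial.induction_on' with
  | add P₁ P₂ ih₁ ih₂ =>
    obtain ⟨Q₁, h₁⟩ := ih₁
    obtain ⟨Q₂, h₂⟩ := ih₂
    refine ⟨Q₁ + Q₂, fun x => ?_⟩
    simp only [eval_add, h₁, h₂]
    ring
  | monomial k a =>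
    refine ⟨C (a / (k + 1)) * Polynomial.bernoulli (k + 1), fun x => ?_⟩
    have hk : (k + 1 : ℚ) ≠ 0 := k.cast_add_one_ne_zero
    rw [add_comm x, eval_C_mul, eval_C_mul, bernoulli_eval_one_add, eval_monomial]
    push_cast
    field_simp

theorem EventuallyPolynomial.sum_range {h : ℕ → ℚ} (hh : EventuallyPolynomial h) :
    EventuallyPolynomial fun n => ∑ j ∈ range n, h j := by
  obtain ⟨P, hP⟩ := hh
  obtain ⟨N, hN⟩ := eventually_atTop.1 hP
  obtain ⟨Q, hQ⟩ := exists_eval_add_one_eq_eval_add P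
  refine ⟨Q + C (∑ j ∈ range N, h j - Q.eval (N : ℚ)), ?_⟩
  filter_upwards [eventually_ge_atTop N] with n hn
  induction n, hn using Nat.le_induction with
  | base => rw [eval_add, eval_C, add_sub_cancel]
  | succ n hn ih =>
    rw [sum_range_succ, ih, hN n hn]
    simp only [eval_add, eval_C, Nat.cast_succ, hQ]
    ring

theorem EventuallyPolynomial.sum_antidiagonal {c : ℕ → ℕ → ℚ}
    (hc : ∀ i, EventuallyPolynomial (c i)) {s : ℕ} (hs : ∀ i, s ≤ i → c s = c i) :
    EventuallyPolynomial fun n => ∑ p ∈ antidiagonal n, c p.1 p.2 := by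
  induction s generalizing c with
  | zero =>
    refine ((comp_add_iff 1).2 (hc 0).sum_range).congr (.of_forall fun n => ?_)
    simp only [← hs _ (Nat.zero_le _)]
    rw [Nat.sum_antidiagonal_eq_sum_range_succ fun _ j => c 0 j]
    exact sum_range_reflect (c 0) (n + 1)
  | succ s ih =>
    have shifted := ih (c := fun i => c (i + 1)) (fun i => hc (i + 1))
      fun i hi => hs (i + 1) (Nat.succ_le_succ hi)
    refine (comp_add_iff 1).1 ((((comp_add_iff 1).2 (hc 0)).add shifted).congr ?_)
    exact .of_forall fun n => Nat.sum_antidiagonal_succ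

theorem coeff_X_mul_derivative {R : Type*} [CommSemiring R] (F : PowerSeries R) (n : ℕ) :
    PowerSeries.coeff n (PowerSeries.X * PowerSeries.derivative R F) =
      n * PowerSeries.coeff n F := by
  cases n with
  | zero => simp
  | succ n =>
    rw [PowerSeries.coeff_succ_X_mul, PowerSeries.coeff_derivative]
    push_cast
    ring

theorem exists_coeff_mul_exp_eq_eval_div_factorial (P : ℚ[X]) :
    ∃ p : ℚ[X], ∀ n : ℕ,
      PowerSeries.coeff n ((p : PowerSeries ℚ) * PowerSeries.exp ℚ) =
        P.eval (n : ℚ) / n.factorial := by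
  induction P using Polynomial.induction_on with
  | C a =>
    refine ⟨C a, fun n => ?_⟩
    simp [PowerSeries.coeff_exp, div_eq_mul_inv]
  | add P₁ P₂ ih₁ ih₂ =>
    obtain ⟨p₁, h₁⟩ := ih₁
    obtain ⟨p₂, h₂⟩ := ih₂
    refine ⟨p₁ + p₂, fun n => ?_⟩
    rw [Polynomial.coe_add, add_mul, map_add, h₁, h₂, eval_add, add_div]
  | monomial k a ih =>
    obtain ⟨p, hp⟩ := ih
    -- `t · d/dt` multiplies the `n`-th coefficient by `n`, and sends `p eᵗ` to `t (p + p') eᵗ`.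
    refine ⟨X * (p + derivative p), fun n => ?_⟩
    have hX : ((X * (p + derivative p) : ℚ[X]) : PowerSeries ℚ) * PowerSeries.exp ℚ =
        PowerSeries.X * PowerSeries.derivative ℚ ((p : PowerSeries ℚ) * PowerSeries.exp ℚ) := by
      rw [Derivation.leibniz, PowerSeries.derivative_exp, PowerSeries.derivative_coe]
      simp only [Polynomial.coe_mul, Polynomial.coe_X, Polynomial.coe_add, smul_eq_mul]
      ring
    rw [hX, coeff_X_mul_derivative, hp, pow_succ, ← mul_assoc, eval_mul_X]
    ring

theorem EventuallyPolynomial.exists_coeff_mul_exp_add_eq {h : ℕ → ℚ}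
    (hh : EventuallyPolynomial h) :
    ∃ p q : ℚ[X], ∀ n : ℕ,
      PowerSeries.coeff n ((p : PowerSeries ℚ) * PowerSeries.exp ℚ + (q : PowerSeries ℚ)) =
        h n / n.factorial := by
  obtain ⟨P, hP⟩ := hh
  obtain ⟨N, hN⟩ := eventually_atTop.1 hP
  obtain ⟨p, hp⟩ := exists_coeff_mul_exp_eq_eval_div_factorial P
  refine ⟨p, PowerSeries.trunc N (.mk fun n => (h n - P.eval (n : ℚ)) / n.factorial), fun n => ?_⟩
  rw [map_add, hp, Polynomial.coeff_coe, PowerSeries.coeff_trunc, PowerSeries.coeff_mk]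
  split_ifs with hn
  · ring
  · rw [hN n (not_lt.1 hn), add_zero]

theorem wellFoundedLT_upperSet {α : Type*} [Preorder α] [WellQuasiOrderedLE α] :
    WellFoundedLT (UpperSet α) := by
  refine ⟨RelEmbedding.wellFounded_iff_isEmpty.2 ⟨fun U => ?_⟩⟩
  have anti : StrictAnti U := fun m n hmn => U.map_rel_iff.2 hmn
  have new : ∀ n, ∃ x ∈ U (n + 1), x ∉ U n := fun n =>
    Set.not_subset.1 (anti n.lt_succ_self).not_ge
  choose x hx hx' using new
  obtain ⟨m, n, hmn, hle⟩ := wellQuasiOrdered_le x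
  exact hx' n ((U n).upper hle (anti.antitone hmn (hx m)))

open Finset.Nat (antidiagonalTuple mem_antidiagonalTuple)

theorem sum_antidiagonalTuple_succ {A : Type*} [AddCommMonoid A] {k : ℕ} (n : ℕ)
    (f : (Fin (k + 1) → ℕ) → A) :
    ∑ v ∈ antidiagonalTuple (k + 1) n, f v =
      ∑ p ∈ antidiagonal n, ∑ w ∈ antidiagonalTuple k p.2, f (Fin.cons p.1 w) := by
  rw [sum_sigma']
  refine sum_nbij' (fun v => ⟨(v 0, ∑ i, Fin.tail v i), Fin.tail v⟩)
    (fun x => Fin.cons x.1.1 x.2) ?_ ?_ ?_ ?_ ?_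
  · intro v hv
    rw [mem_antidiagonalTuple, Fin.sum_univ_succ] at hv
    simpa [mem_antidiagonalTuple, Fin.tail] using hv
  · rintro ⟨⟨i, j⟩, w⟩ hx
    obtain ⟨hij, hw⟩ : i + j = n ∧ ∑ l, w l = j := by simpa [mem_antidiagonalTuple] using hx
    simp [mem_antidiagonalTuple, Fin.sum_univ_succ, hw, hij]
  · exact fun v _ => Fin.cons_self_tail v
  · rintro ⟨⟨i, j⟩, w⟩ hx
    obtain ⟨-, rfl⟩ : i + j = n ∧ ∑ l, w l = j := by simpa [mem_antidiagonalTuple] using hx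
    simp
  · exact fun v _ => by rw [Fin.cons_self_tail]

open Classical in
theorem eventuallyPolynomial_card_notMem_upperSet {k : ℕ} (U : UpperSet (Fin k → ℕ)) :
    EventuallyPolynomial fun n => #{v ∈ antidiagonalTuple k n | v ∉ U} := by
  induction k with
  | zero =>
    refine EventuallyPolynomial.zero.congr ?_
    filter_upwards [eventually_ne_atTop 0] with n hn
    obtain ⟨n, rfl⟩ := Nat.exists_eq_succ_of_ne_zero hn
    simp
  | succ k ih =>
    let slice (i : ℕ) : UpperSet (Fin k → ℕ) :=
      ⟨{w | Fin.cons i w ∈ U}, fun _ _ hab => U.upper (Fin.cons_le_cons.2 ⟨le_rfl, hab⟩)⟩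
    have slice_antitone : Antitone slice := fun _ _ hij _ =>
      U.upper (Fin.cons_le_cons.2 ⟨hij, le_rfl⟩)
    have := wellFoundedLT_upperSet (α := Fin k → ℕ)
    obtain ⟨s, hs⟩ := WellFoundedLT.antitone_chain_condition slice_antitone
    refine (EventuallyPolynomial.sum_antidiagonal (s := s) (fun i => ih (slice i))
      fun i hi => by rw [hs i hi]).congr (.of_forall fun n => ?_)
    simp only [card_filter, sum_antidiagonalTuple_succ, Nat.cast_sum]
    rfl

/-- For a vector `v` of gaps, the subset of `ℕ` that skips `v 0` numbers, takes the next one, skips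
`v 1`, takes the next one, and so on, listed in increasing order. An order embedding
`Fin d ↪o Fin n` is recorded by `d + 1` gaps, its last position being the bound `n`. -/
def gapPosition {k : ℕ} (v : Fin k → ℕ) (i : Fin k) : ℕ :=
  i + ∑ l ∈ Iic i, v l

section Gaps

variable {k d : ℕ}

theorem gapPosition_strictMono (v : Fin k → ℕ) : StrictMono (gapPosition v) := fun _ _ hij =>
  add_lt_add_of_lt_of_le hij (sum_le_sum_of_subset (Iic_subset_Iic.2 hij.le))

theorem gapPosition_last (v : Fin (d + 1) → ℕ) : gapPosition v (Fin.last d) = d + ∑ l, v l := by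
  rw [gapPosition, ← Fin.top_eq_last, Iic_top, Fin.top_eq_last, Fin.val_last]

theorem gapPosition_zero (v : Fin (d + 1) → ℕ) : gapPosition v 0 = v 0 := by
  simp [gapPosition, ← bot_eq_zero (α := Fin (d + 1))]

theorem gapPosition_succ (v : Fin (d + 1) → ℕ) (i : Fin d) :
    gapPosition v i.succ = gapPosition v i.castSucc + 1 + v i.succ := by
  have hIic : Iic i.succ = insert i.succ (Iic i.castSucc) := by
    ext l
    simp only [mem_Iic, mem_insert, Fin.le_def, Fin.ext_iff, Fin.val_succ, Fin.val_castSucc]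
    omega
  rw [gapPosition, gapPosition, hIic, sum_insert (by simp)]
  simp only [Fin.val_succ, Fin.val_castSucc]
  ring

theorem gapPosition_injective :
    Function.Injective (gapPosition : (Fin (d + 1) → ℕ) → Fin (d + 1) → ℕ) := by
  intro v w hvw
  ext i
  induction i using Fin.cases with
  | zero => rw [← gapPosition_zero v, hvw, gapPosition_zero]
  | succ i =>
    have hsucc := congrFun hvw i.succ
    rw [gapPosition_succ, gapPosition_succ, hvw] at hsucc
    exact Nat.add_left_cancel hsucc

theorem exists_gapPosition_eq {F : Fin (d + 1) → ℕ} (hF : StrictMono F) :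
    ∃ v, gapPosition v = F := by
  refine ⟨Fin.cases (F 0) fun i => F i.succ - F i.castSucc - 1, funext fun i => ?_⟩
  induction i using Fin.induction with
  | zero => exact gapPosition_zero _
  | succ i ih =>
    have hlt : F i.castSucc < F i.succ := hF i.castSucc_lt_succ
    rw [gapPosition_succ, ih, Fin.cases_succ]
    omega

theorem exists_strictMono_comp_gapPosition {v w : Fin k → ℕ} (hvw : v ≤ w) :
    ∃ γ : ℕ → ℕ, StrictMono γ ∧ ∀ i, γ (gapPosition v i) = gapPosition w i := by
  -- Insert `w l - v l` new numbers just below the `l`-th chosen one, for every `l`.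
  refine ⟨fun m => m + ∑ l with gapPosition v l ≤ m, (w l - v l), fun a b hab => ?_, fun i => ?_⟩
  · exact add_lt_add_of_lt_of_le hab <| sum_le_sum_of_subset <|
      monotone_filter_right _ fun _ _ hl => hl.trans hab.le
  · have hIic : ({l | gapPosition v l ≤ gapPosition v i} : Finset (Fin k)) = Iic i := by
      ext l
      simp [(gapPosition_strictMono v).le_iff_le]
    simp only [hIic]
    rw [gapPosition, gapPosition, add_assoc, ← sum_add_distrib]
    simp only [Nat.add_sub_of_le (hvw _)]

/-- The order embedding whose image leaves the gaps `v` in `Fin (d + n)`. -/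
def gapEmb {n : ℕ} (v : {v : Fin (d + 1) → ℕ // ∑ l, v l = n}) : Fin d ↪o Fin (d + n) :=
  OrderEmbedding.ofStrictMono
    (fun i => ⟨gapPosition v.1 i.castSucc,
      (gapPosition_strictMono v.1 i.castSucc_lt_last).trans_eq (by rw [gapPosition_last, v.2])⟩)
    fun _ _ hij => gapPosition_strictMono v.1 (Fin.castSucc_lt_castSucc_iff.2 hij)

theorem gapEmb_injective {n : ℕ} : Function.Injective (gapEmb (d := d) (n := n)) := by
  intro v w hvw
  refine Subtype.ext (gapPosition_injective (funext fun i => ?_))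
  induction i using Fin.lastCases with
  | last => rw [gapPosition_last, gapPosition_last, v.2, w.2]
  | cast i => exact congrArg Fin.val (DFunLike.congr_fun hvw i)

theorem strictMono_snoc {f : Fin d → ℕ} (hf : StrictMono f) {n : ℕ} (hn : ∀ i, f i < n) :
    StrictMono (Fin.snoc f n : Fin (d + 1) → ℕ) := by
  intro i j hij
  obtain ⟨i, rfl⟩ := Fin.exists_castSucc_eq.2 (hij.trans_le j.le_last).ne
  induction j using Fin.lastCases with
  | last => simpa using hn i
  | cast j => simpa using hf (Fin.castSucc_lt_castSucc_iff.1 hij)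

theorem gapEmb_surjective {n : ℕ} : Function.Surjective (gapEmb (d := d) (n := n)) := by
  intro f
  obtain ⟨v, hv⟩ := exists_gapPosition_eq
    (strictMono_snoc (f := fun i => (f i : ℕ)) f.strictMono fun i => (f i).isLt)
  have hsum : d + ∑ l, v l = d + n := by rw [← gapPosition_last, hv, Fin.snoc_last]
  refine ⟨⟨v, Nat.add_left_cancel hsum⟩, ?_⟩
  ext i
  simp [gapEmb, hv]

theorem exists_gapEmb_trans_eq {v w : Fin (d + 1) → ℕ} (hvw : v ≤ w) :
    ∃ γ : Fin (d + ∑ l, v l) ↪o Fin (d + ∑ l, w l),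
      (gapEmb ⟨v, rfl⟩).trans γ = gapEmb ⟨w, rfl⟩ := by
  obtain ⟨γ, hγ, hγv⟩ := exists_strictMono_comp_gapPosition hvw
  have hγ_last : γ (d + ∑ l, v l) = d + ∑ l, w l := by
    rw [← gapPosition_last, hγv, gapPosition_last]
  refine ⟨OrderEmbedding.ofStrictMono
    (fun x => ⟨γ x, (hγ x.isLt).trans_eq hγ_last⟩) fun _ _ hxy => hγ hxy, ?_⟩
  ext i
  exact hγv i.castSucc

end Gaps

theorem eventuallyPolynomial_card_notMem_of_trans_mem {d : ℕ} {P : ∀ n, Set (Fin d ↪o Fin n)}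
    (hP : ∀ {m n : ℕ} (γ : Fin m ↪o Fin n), ∀ f ∈ P m, f.trans γ ∈ P n) :
    EventuallyPolynomial fun n => Nat.card {f // f ∉ P n} := by
  classical
  let U : UpperSet (Fin (d + 1) → ℕ) :=
    { carrier := {v | gapEmb ⟨v, rfl⟩ ∈ P _}
      upper' := fun v w hvw hv => by
        obtain ⟨γ, hγ⟩ := exists_gapEmb_trans_eq hvw
        exact hγ.subst (motive := (· ∈ P _)) (hP γ _ hv) }
  have mem_U {n : ℕ} (v : {v : Fin (d + 1) → ℕ // ∑ l, v l = n}) :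
      v.1 ∈ U ↔ gapEmb v ∈ P (d + n) := by
    obtain ⟨v, rfl⟩ := v
    rfl
  refine (EventuallyPolynomial.comp_add_iff d).1
    ((eventuallyPolynomial_card_notMem_upperSet U).congr (.of_forall fun n => ?_))
  have card_eq : Nat.card {f // f ∉ P (n + d)} = #{v ∈ antidiagonalTuple (d + 1) n | v ∉ U} := by
    rw [add_comm n d, ← Nat.subtype_card _ fun v => by rw [mem_filter, mem_antidiagonalTuple]]
    refine Nat.card_congr (Equiv.trans (Equiv.symm ?_) (Equiv.subtypeSubtypeEquivSubtypeInter _ _))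
    exact (Equiv.ofBijective gapEmb ⟨gapEmb_injective, gapEmb_surjective⟩).subtypeEquiv
      fun v => not_congr (mem_U v)
  exact congrArg Nat.cast card_eq

theorem finrank_span_image_eq_card_of_isLowerSet {K V ι : Type*} [DivisionRing K] [AddCommGroup V]
    [Module K V] [Module.Finite K V] [LinearOrder ι] (e : ι → V) {s : Finset ι}
    (hs : IsLowerSet (s : Set ι)) [DecidablePred fun i => e i ∉ Submodule.span K (e '' Set.Iio i)] :
    Module.finrank K (Submodule.span K (e '' s)) =
      #{i ∈ s | e i ∉ Submodule.span K (e '' Set.Iio i)} := by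
  induction s using Finset.induction_on_max with
  | empty => simp
  | insert a s ha ih =>
    have has : a ∉ s := fun h => (ha a h).false
    have hIio : Set.Iio a = s := by
      ext x
      refine ⟨fun hx => ?_, ha x⟩
      exact (mem_insert.1 (hs hx.le (mem_insert_self a s))).resolve_left hx.ne
    rw [coe_insert, Set.image_insert_eq, Submodule.span_insert, sup_comm, filter_insert]
    specialize ih (hIio ▸ isLowerSet_Iio a)
    split_ifs with hea <;> rw [hIio] at hea
    · rw [sup_eq_left.2 ((Submodule.span_singleton_le_iff_mem _ _).2 hea), ih]
    · rw [card_insert_of_notMem (by simp [has]), Submodule.finrank_sup_span_singleton hea, ih]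

theorem finrank_eq_card_notMem_span_image_Iio {K V ι : Type*} [DivisionRing K] [AddCommGroup V]
    [Module K V] [Finite ι] [LinearOrder ι] {e : ι → V} (he : Submodule.span K (Set.range e) = ⊤) :
    Module.finrank K V = Nat.card {i // e i ∉ Submodule.span K (e '' Set.Iio i)} := by
  classical
  have := Fintype.ofFinite ι
  have : Module.Finite K V := ⟨he ▸ Submodule.fg_span (Set.finite_range e)⟩
  rw [← finrank_top K V, ← he, ← Set.image_univ, ← coe_univ,
    finrank_span_image_eq_card_of_isLowerSet e (by simpa using isLowerSet_univ),
    Nat.card_eq_fintype_card, Fintype.card_subtype]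

theorem exists_orderEmbedding_comp_eq {α : Type*} [Fintype α] {d n : ℕ} {f : α → Fin n}
    (hf : Function.Injective f) (hα : Fintype.card α ≤ d) (hn : d ≤ n) :
    ∃ (e : Fin d ↪o Fin n) (g : α → Fin d), e ∘ g = f := by
  classical
  obtain ⟨t, hft, ht⟩ := exists_superset_card_eq (s := univ.image f)
    (by rwa [card_image_of_injective _ hf, card_univ]) (hn.trans_eq (Fintype.card_fin n).symm)
  have factors (a : α) : ∃ i, t.orderEmbOfFin ht i = f a := by
    rw [← Set.mem_range, range_orderEmbOfFin]
    exact hft (mem_image_of_mem f (mem_univ a))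
  choose g hg using factors
  exact ⟨t.orderEmbOfFin ht, g, funext hg⟩

universe u v

section FIModule

variable {k : Type u} [Ring k] (M : FIObj ⥤ ModuleCat.{v} k)

instance (S T : FIObj) : Finite (S ⟶ T) :=
  inferInstanceAs (Finite {f : S.α → T.α // Function.Injective f})

/-- A family of elements of an FI-module generates it: at every finite set, their images span. -/
def IsGenerating {ι : Type*} {S : ι → FIObj} (m : ∀ i, M.obj (S i)) : Prop :=
  ∀ T, Submodule.span k (Set.range fun x : Σ i, S i ⟶ T => M.map x.2 (m x.1)) = ⊤

theorem FIMod.FG.exists_isGenerating {M : FIMod} (hM : M.FG) :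
    ∃ (r : ℕ) (S : Fin r → FIObj) (m : ∀ i, M.obj (S i)), IsGenerating M m := by
  obtain ⟨r, S, m, hm⟩ := hM
  refine ⟨r, S, m, hm ⟨_, fun {T T'} f x hx => ?_⟩ fun i => ?_⟩
  · induction hx using Submodule.span_induction with
    | mem x hx =>
      obtain ⟨⟨i, g⟩, rfl⟩ := hx
      exact Submodule.subset_span ⟨⟨i, g ≫ f⟩, by simp⟩
    | zero => simp
    | add x y _ _ hx hy => simpa using add_mem hx hy
    | smul a x _ hx => simpa using Submodule.smul_mem _ a hx
  · exact Submodule.subset_span ⟨⟨i, 𝟙 _⟩, by simp⟩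

variable {M}

theorem IsGenerating.finite_obj {ι : Type*} [Finite ι] {S : ι → FIObj} {m : ∀ i, M.obj (S i)}
    (hm : IsGenerating M m) (T : FIObj) : Module.Finite k (M.obj T) :=
  ⟨hm T ▸ Submodule.fg_span (Set.finite_range _)⟩

/-- The morphism of FI underlying an order embedding. -/
def FIObj.homOfOrderEmb {a b : ℕ} (f : Fin a ↪o Fin b) : FIObj.of (Fin a) ⟶ FIObj.of (Fin b) :=
  ⟨f, f.injective⟩

/-- Symbols `(i, f)` standing for the image of the `i`-th element of a family in `M_d` under the
order embedding `f`; they play the part of monomials in a Gröbner basis argument. -/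
@[ext]
structure OIMonomial (κ : Type*) (d n : ℕ) where
  index : κ
  emb : Fin d ↪o Fin n

namespace OIMonomial

variable {κ : Type*} {d l n : ℕ}

/-- A monomial is a pair; this carries finiteness and counting over from products. -/
def equivProd : OIMonomial κ d n ≃ κ × (Fin d ↪o Fin n) where
  toFun x := (x.index, x.emb)
  invFun x := ⟨x.1, x.2⟩

instance [Finite κ] : Finite (OIMonomial κ d n) :=
  .of_equiv _ equivProd.symm

theorem card_subtype [Fintype κ] (p : OIMonomial κ d n → Prop) :
    Nat.card {x // p x} = ∑ j, Nat.card {f // p ⟨j, f⟩} := by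
  rw [← Nat.card_sigma]
  exact Nat.card_congr ((equivProd.subtypeEquiv fun _ => Iff.rfl).trans
    (Equiv.subtypeProdEquivSigmaSubtype fun j f => p ⟨j, f⟩))

/-- The monomial order: compare the generators first, then the embeddings lexicographically. -/
noncomputable instance [LinearOrder κ] : LinearOrder (OIMonomial κ d n) :=
  LinearOrder.lift' (fun x => toLex (x.index, toLex ⇑x.emb)) fun _ _ hxy =>
    OIMonomial.ext (congrArg (fun z => (ofLex z).1) hxy)
      (DFunLike.coe_injective (congrArg (fun z => ofLex (ofLex z).2) hxy))

/-- Push a monomial forward along an order embedding. -/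
def map (γ : Fin l ↪o Fin n) (x : OIMonomial κ d l) : OIMonomial κ d n :=
  ⟨x.index, x.emb.trans γ⟩

theorem lt_iff [LinearOrder κ] {x y : OIMonomial κ d n} :
    x < y ↔ x.index < y.index ∨ x.index = y.index ∧ toLex ⇑x.emb < toLex ⇑y.emb :=
  Prod.Lex.toLex_lt_toLex

theorem map_strictMono [LinearOrder κ] (γ : Fin l ↪o Fin n) :
    StrictMono (map γ : OIMonomial κ d l → OIMonomial κ d n) := by
  intro x y hxy
  rw [lt_iff] at hxy ⊢
  refine hxy.imp_right (And.imp_right ?_)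
  rintro ⟨i, heq, hlt⟩
  exact ⟨i, fun j hj => congrArg γ (heq j hj), γ.lt_iff_lt.2 hlt⟩

/-- The element of `M_n` a monomial stands for. -/
def eval (b : κ → M.obj (FIObj.of (Fin d))) (x : OIMonomial κ d n) : M.obj (FIObj.of (Fin n)) :=
  M.map (FIObj.homOfOrderEmb x.emb) (b x.index)

variable (b : κ → M.obj (FIObj.of (Fin d)))

theorem map_eval (γ : Fin l ↪o Fin n) (x : OIMonomial κ d l) :
    M.map (FIObj.homOfOrderEmb γ) (eval b x) = eval b (map γ x) := by
  rw [eval, ← ConcreteCategory.comp_apply, ← M.map_comp]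
  rfl

theorem eval_map_mem_span [LinearOrder κ] (γ : Fin l ↪o Fin n) {x : OIMonomial κ d l}
    (hx : eval b x ∈ Submodule.span k (eval b '' Set.Iio x)) :
    eval b (map γ x) ∈ Submodule.span k (eval b '' Set.Iio (map γ x)) := by
  have image_mem := Submodule.mem_map_of_mem (f := (M.map (FIObj.homOfOrderEmb γ)).hom) hx
  rw [Submodule.map_span, Set.image_image] at image_mem
  rw [← map_eval]
  refine Submodule.span_mono ?_ image_mem
  rintro _ ⟨y, hy, rfl⟩
  exact ⟨map γ y, map_strictMono γ hy, (map_eval b γ y).symm⟩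

variable {b}

theorem span_range_eval {ι : Type*} {S : ι → FIObj} {m : ∀ i, M.obj (S i)}
    (hm : IsGenerating M m) (hS : ∀ i, Fintype.card (S i).α ≤ d)
    (hb : Submodule.span k (Set.range b) = ⊤) (hn : d ≤ n) :
    Submodule.span k (Set.range (eval b : OIMonomial κ d n → _)) = ⊤ := by
  rw [eq_top_iff, ← hm, Submodule.span_le]
  rintro _ ⟨⟨i, f⟩, rfl⟩
  obtain ⟨e, g, hge⟩ := exists_orderEmbedding_comp_eq f.2 (hS i) hn
  let g' : S i ⟶ FIObj.of (Fin d) := ⟨g, .of_comp (hge ▸ f.2)⟩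
  have hf : f = g' ≫ FIObj.homOfOrderEmb e := Subtype.ext hge.symm
  have image_mem : M.map f (m i) ∈
      (Submodule.span k (Set.range b)).map (M.map (FIObj.homOfOrderEmb e)).hom :=
    ⟨M.map g' (m i), hb ▸ Submodule.mem_top, by simp [hf]⟩
  rw [Submodule.map_span, ← Set.range_comp] at image_mem
  refine Submodule.span_mono ?_ image_mem
  rintro _ ⟨j, rfl⟩
  exact ⟨⟨j, e⟩, rfl⟩

end OIMonomial

end FIModule

section HilbertSeries

variable {k : Type u} [DivisionRing k] {M : FIObj ⥤ ModuleCat.{v} k}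

theorem IsGenerating.eventuallyPolynomial_finrank {ι : Type*} [Finite ι] {S : ι → FIObj}
    {m : ∀ i, M.obj (S i)} (hm : IsGenerating M m) :
    EventuallyPolynomial fun n => Module.finrank k (M.obj (FIObj.of (Fin n))) := by
  obtain ⟨d, hd⟩ : ∃ d, ∀ i, Fintype.card (S i).α ≤ d :=
    (Set.finite_range fun i => Fintype.card (S i).α).bddAbove.imp fun _ h i => h ⟨i, rfl⟩
  have := hm.finite_obj (FIObj.of (Fin d))
  let b := Module.finBasis k (M.obj (FIObj.of (Fin d)))
  let Reducible {n : ℕ} (x : OIMonomial _ d n) : Prop :=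
    x.eval b ∈ Submodule.span k (OIMonomial.eval b '' Set.Iio x)
  have card_irreducible (j) : EventuallyPolynomial fun n =>
      Nat.card {f : Fin d ↪o Fin n // f ∉ {f | Reducible ⟨j, f⟩}} :=
    eventuallyPolynomial_card_notMem_of_trans_mem fun γ _ =>
      OIMonomial.eval_map_mem_span b γ
  refine (EventuallyPolynomial.sum (s := univ) fun j _ => card_irreducible j).congr ?_
  filter_upwards [eventually_ge_atTop d] with n hn
  rw [finrank_eq_card_notMem_span_image_Iio (OIMonomial.span_range_eval hm hd b.span_eq hn),
    OIMonomial.card_subtype, Nat.cast_sum]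

theorem fg_FIMod_hilbert_series_general {ι : Type*} [Finite ι] {S : ι → FIObj}
    {m : ∀ i, M.obj (S i)} (hm : IsGenerating M m) :
    (∀ n : ℕ, FiniteDimensional k (M.obj (FIObj.of (Fin n)))) ∧
    ∃ p q : ℚ[X], ∀ n : ℕ,
      PowerSeries.coeff n ((p : PowerSeries ℚ) * PowerSeries.exp ℚ + (q : PowerSeries ℚ)) =
        (Module.finrank k (M.obj (FIObj.of (Fin n))) : ℚ) / (n.factorial : ℚ) :=
  ⟨fun _ => hm.finite_obj _, hm.eventuallyPolynomial_finrank.exists_coeff_mul_exp_add_eq⟩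

end HilbertSeries

end

/-- For a finitely generated FI-module M each `M_n` is finite
dimensional, and the exponential Hilbert series `Σ dim(M_n) tⁿ/n!` equals
`p(t)·eᵗ + q(t)` for polynomials p, q with rational coefficients. -/
theorem fg_FIMod_hilbert_series (M : FIMod) (hM : FIMod.FG M) :
    (∀ n : ℕ, FiniteDimensional ℂ (M.obj (FIObj.of (Fin n)))) ∧
    ∃ p q : Polynomial ℚ, ∀ n : ℕ,
      PowerSeries.coeff n
          ((p : PowerSeries ℚ) * PowerSeries.exp ℚ + (q : PowerSeries ℚ)) =
        (Module.finrank ℂ (M.obj (FIObj.of (Fin n))) : ℚ) / (Nat.factorial n : ℚ) := by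
  obtain ⟨_, _, _, hm⟩ := hM.exists_isGenerating
  exact fg_FIMod_hilbert_series_general hm
end

section
/- Let Sh be the shift endofunctor of FI-modules over ℂ, defined by (Sh M)(S) = M(S ⊔ {∗}), and let ι_M : M → Sh M be the natural transformation induced by the inclusions S ↪ S ⊔ {∗}. Extend Sh and ι termwise to bounded complexes of FI-modules, and for a bounded complex C let ∂(C) denote the mapping cone of ι_C : C → Sh C. Then for every finitely generated FI-module M over ℂ (regarded as a complex concentrated in degree 0) there exist nonnegative integers n_1 and n_2 such that the complex ∂^{n_1}(Sh^{n_2} M) is exact, i.e. it vanishes in the bounded derived category of FI-modules. -/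
open CategoryTheory

noncomputable section

/-- The endofunctor S ↦ S ⊔ {∗} of FI. -/
def plusOne : FIObj ⥤ FIObj where
  obj S := FIObj.of (S.α ⊕ PUnit)
  map f := ⟨Sum.map f.1 id, f.2.sumMap Function.injective_id⟩
  map_id := by
    intro S
    apply Subtype.ext
    funext x
    cases x <;> rfl
  map_comp := by
    intro S T U f g
    apply Subtype.ext
    funext x
    cases x <;> rfl

/-- The shift endofunctor of FI-modules: (Sh M)(S) = M(S ⊔ {∗}). -/
def Sh : FIMod ⥤ FIMod := (CategoryTheory.Functor.whiskeringLeft FIObj FIObj (ModuleCat.{0} ℂ)).obj plusOne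

instance : Sh.Additive := by
  constructor
  intro F G f g
  rfl

/-- The FI-morphism S → S ⊔ {∗}. -/
def inlHom (S : FIObj) : S ⟶ plusOne.obj S := ⟨Sum.inl, Sum.inl_injective⟩

/-- The natural transformation ι : id → Sh induced by the inclusions S ↪ S ⊔ {∗}. -/
def shiftUnit : 𝟭 FIMod ⟶ Sh where
  app M :=
    { app := fun S => M.map (inlHom S)
      naturality := fun S T f => by
        dsimp [Sh]
        rw [← M.map_comp, ← M.map_comp]
        congr 1 }
  naturality := fun M N η => by
    apply NatTrans.ext
    funext S
    exact (η.naturality (inlHom S)).symm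

abbrev FICx := CochainComplex FIMod ℤ

/-- The shift functor on complexes of FI-modules. -/
def ShCx : FICx ⥤ FICx := Sh.mapHomologicalComplex _

/-- The map of complexes C → Sh C. -/
def iotaCx (C : FICx) : C ⟶ ShCx.obj C where
  f i := shiftUnit.app (C.X i)
  comm' := fun i j _ => (shiftUnit.naturality (C.d i j)).symm

/-- The functor ∂: the mapping cone of ι_C : C → Sh C. -/
def del (C : FICx) : FICx := CochainComplex.mappingCone (iotaCx C)

/-!
Suppose `M` is generated by finitely many elements of degree less than `d`; the theorem holds with
`n₁ = d`, by induction on `d`. Torsion of `M` is bounded: give the monomials (images of generators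
under injections into `{0, …, n - 1}`) a linear order compatible with order-preserving injections,
and suppose that `ι_M` kills a nonzero `x` of degree `n` for infinitely many `n`. By Higman's lemma
the leading monomial of one such `x` divides, along some order-preserving `g`, the leading monomial
of another such element, of larger degree. Since `M(g) x = 0`, the latter monomial is a combination
of smaller ones, which contradicts its being a leading monomial. Hence `ι` is injective on
`Sh^n M` for all large `n`, and there `∂ (Sh^n M)` is quasi-isomorphic to the cokernel of `ι`. That
cokernel is `Sh^n (coker ι_M)`, by exchanging the two added points, and `coker ι_M` is generated in
degrees less than `d - 1`, because a map hitting `∗` can be restricted to the complement of the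
preimage of `∗`, while a map missing `∗` dies in the cokernel.
-/

open Limits

/-! ### Leading terms and monomials -/

section LeadingTerm

open Set Submodule

variable {K V B : Type*} [DivisionRing K] [AddCommGroup V] [Module K V] [LinearOrder B]

theorem exists_mem_span_image_Iic {v : B → V} {s : Set B} {x : V} (hx : x ≠ 0)
    (hxs : x ∈ span K (v '' s)) : ∃ b ∈ s, x ∈ span K (v '' Iic b) := by
  obtain ⟨l, hl, rfl⟩ := (Finsupp.mem_span_image_iff_linearCombination K).1 hxs
  have hl_ne : l.support.Nonempty :=
    Finsupp.support_nonempty_iff.2 fun h => hx (by rw [h, map_zero])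
  exact ⟨l.support.max' hl_ne, hl (l.support.max'_mem hl_ne),
    (Finsupp.mem_span_image_iff_linearCombination K).2 ⟨l, l.support.le_max', rfl⟩⟩

theorem exists_leading_term [WellFoundedLT B] {v : B → V} {x : V} (hx : x ≠ 0)
    (hxv : x ∈ span K (range v)) :
    ∃ b, v b ∉ span K (v '' Iio b) ∧ ∃ c : K, c ≠ 0 ∧ x - c • v b ∈ span K (v '' Iio b) := by
  have hx_Iic : ∃ b, x ∈ span K (v '' Iic b) := by
    rw [← image_univ] at hxv
    simpa using exists_mem_span_image_Iic hx hxv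
  obtain ⟨b, hxb, hb_min⟩ := WellFounded.has_min wellFounded_lt {b | x ∈ span K (v '' Iic b)} hx_Iic
  have hx_Iio : x ∉ span K (v '' Iio b) := fun h =>
    let ⟨a, hab, hxa⟩ := exists_mem_span_image_Iic hx h
    hb_min a hxa hab
  obtain ⟨c, y, hy, rfl⟩ : ∃ c : K, ∃ y ∈ span K (v '' Iio b), x = c • v b + y := by
    rwa [mem_ofPred_eq, ← Iio_insert, image_insert_eq, mem_span_insert] at hxb
  refine ⟨b, fun hvb => hx_Iio (add_mem (smul_mem _ c hvb) hy), c, ?_, by rwa [add_sub_cancel_left]⟩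
  rintro rfl
  exact hx_Iio (by rwa [zero_smul, zero_add])

end LeadingTerm

/-- The monomials of degree `n` of the free FI-module with one generator on each finite set `A i`:
an index `i` and an injection `A i ↪ {0, …, n - 1}`. -/
def FIMonomial {ι : Type*} (A : ι → Type*) (n : ℕ) : Type _ := Σ i, A i ↪ Fin n

namespace FIMonomial

variable {ι : Type*} {A : ι → Type*} {n n' : ℕ}

instance [Finite ι] : Finite (FIMonomial A n) :=
  inferInstanceAs (Finite (Σ i, A i ↪ Fin n))

/-- The action of order-preserving injections on monomials, by postcomposition. -/
def map (g : Fin n ↪o Fin n') (b : FIMonomial A n) : FIMonomial A n' :=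
  ⟨b.1, b.2.trans g.toEmbedding⟩

/-- A monomial as an element of the lexicographic sum of the lexicographic powers
`A i → Fin n`. -/
def toLexSigma (b : FIMonomial A n) : Σₗ i, Lex (A i → Fin n) := toLex ⟨b.1, toLex b.2⟩

theorem toLexSigma_injective : Function.Injective (toLexSigma (A := A) (n := n)) := by
  rintro ⟨i, f⟩ ⟨j, g⟩ h
  obtain ⟨rfl, hfg⟩ := Sigma.mk.inj_iff.1 (toLex.injective h)
  exact congrArg (Sigma.mk i) (DFunLike.coe_injective (toLex.injective (eq_of_heq hfg)))

section Order

variable [LinearOrder ι] [∀ i, LinearOrder (A i)] [∀ i, WellFoundedLT (A i)]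

instance : LinearOrder (FIMonomial A n) := LinearOrder.lift' toLexSigma toLexSigma_injective

theorem map_strictMono (g : Fin n ↪o Fin n') : StrictMono (map (A := A) g) := by
  rintro ⟨i, f⟩ ⟨j, f'⟩ h
  change Sigma.Lex _ _ _ _ at h
  change Sigma.Lex _ _ _ _
  rcases h with ⟨_, _, hij⟩ | ⟨_, _, a, heq, hlt⟩
  · exact .left _ _ hij
  · exact .right _ _ ⟨a, fun a' ha' => congrArg g (heq a' ha'), g.lt_iff_lt.2 hlt⟩

end Order

/-- `b` divides `c` if `c` is the image of `b` under an order-preserving injection. -/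
def Divides (b c : Σ n, FIMonomial A n) : Prop :=
  ∃ g : Fin b.1 ↪o Fin c.1, c.2 = b.2.map g

/-- The word of length `n` whose letter at `p` is the preimage of `p` under the injection,
or `none` if there is no preimage. -/
def word (b : FIMonomial A n) : List (Option (Σ i, A i)) :=
  List.ofFn fun p => (Function.partialInv b.2 p).map (Sigma.mk b.1)

theorem divides_of_word_sublist {b c : Σ n, FIMonomial A n} (h_index : b.2.1 = c.2.1)
    (h_word : b.2.word.Sublist c.2.word) : Divides b c := by
  obtain ⟨n, i, f⟩ := b
  obtain ⟨n', j, f'⟩ := c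
  obtain rfl : i = j := h_index
  obtain ⟨g, hg⟩ := List.sublist_iff_exists_fin_orderEmbedding_get_eq.1 h_word
  let g' : Fin n ↪o Fin n' :=
    ((Fin.castOrderIso List.length_ofFn.symm).toOrderEmbedding.trans g).trans
      (Fin.castOrderIso List.length_ofFn).toOrderEmbedding
  have h_letter (p : Fin n) : Function.partialInv f p = Function.partialInv f' (g' p) := by
    have := hg (Fin.cast List.length_ofFn.symm p)
    simp only [word, List.get_ofFn] at this
    exact Option.map_injective sigma_mk_injective this
  refine ⟨g', congrArg (Sigma.mk i) (DFunLike.ext _ _ fun s => ?_)⟩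
  have h_inv : Function.partialInv f' (g' (f s)) = some s := by
    rw [← h_letter, Function.partialInv_left f.injective]
  exact (f'.injective.isPartialInv s _).1 h_inv

theorem wellQuasiOrdered_divides [Finite ι] [∀ i, Finite (A i)] :
    WellQuasiOrdered (Divides (A := A)) := by
  have higman : WellQuasiOrdered (List.SublistForall₂ (α := Option (Σ i, A i)) (· = ·)) := by
    have := (Set.finite_univ.partiallyWellOrderedOn
      (r := (· = ·))).partiallyWellOrderedOn_sublistForall₂ (α := Option (Σ i, A i)) (· = ·)
    simpa [Set.partiallyWellOrderedOn_univ_iff] using this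
  intro b
  obtain ⟨p, q, hpq, h_index, h_word⟩ :=
    (Finite.wellQuasiOrdered (α := ι) (· = ·)).prod higman fun k => ((b k).2.1, (b k).2.word)
  obtain ⟨l, hl, h_sublist⟩ := List.sublistForall₂_iff.1 h_word
  rw [List.forall₂_eq_eq_eq] at hl
  subst hl
  exact ⟨p, q, hpq, divides_of_word_sublist h_index h_sublist⟩

end FIMonomial

/-! ### The category FI -/

namespace FIObj

/-- The isomorphism of FI given by a bijection of finite sets. -/
def isoOfEquiv {S T : FIObj} (e : S.α ≃ T.α) : S ≅ T where
  hom := ⟨e, e.injective⟩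
  inv := ⟨e.symm, e.symm.injective⟩
  hom_inv_id := Subtype.ext (funext e.symm_apply_apply)
  inv_hom_id := Subtype.ext (funext e.apply_symm_apply)

open Classical in
/-- The finite set `S \ {s}`. -/
def erase (S : FIObj) (s : S.α) : FIObj := of {t : S.α // t ≠ s}

open Classical in
theorem card_erase_lt (S : FIObj) (s : S.α) : Fintype.card (S.erase s).α < Fintype.card S.α :=
  Fintype.card_subtype_lt (x := s) (by simp)

open Classical in
/-- The bijection `(S \ {s}) ⊔ {∗} ≃ S` sending `∗` to `s`. -/
def plusOneEraseIso (S : FIObj) (s : S.α) : plusOne.obj (S.erase s) ≅ S :=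
  isoOfEquiv (Equiv.subtypeNeSumPUnit s)

theorem exists_eq_comp_inlHom {S T : FIObj} (f : S ⟶ plusOne.obj T)
    (hf : ∀ s, f.1 s ≠ Sum.inr PUnit.unit) : ∃ g : S ⟶ T, f = g ≫ inlHom T := by
  have h_inl (s : S.α) : ∃ t : T.α, f.1 s = Sum.inl t := by
    rcases h : f.1 s with t | t
    exacts [⟨t, rfl⟩, absurd h (hf s)]
  choose g hg using h_inl
  exact ⟨⟨g, fun s t hst => f.2 (by rw [hg, hg, hst])⟩, Subtype.ext (funext hg)⟩

theorem exists_plusOneEraseIso_hom_comp_eq {S T : FIObj} (f : S ⟶ plusOne.obj T) {s : S.α}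
    (hs : f.1 s = Sum.inr PUnit.unit) :
    ∃ g : S.erase s ⟶ T, (S.plusOneEraseIso s).hom ≫ f = plusOne.map g := by
  let i : S.erase s ⟶ S := ⟨Subtype.val, Subtype.val_injective⟩
  obtain ⟨g, hg⟩ := exists_eq_comp_inlHom (i ≫ f) fun t ht => t.2 (f.2 (ht.trans hs.symm))
  refine ⟨g, Subtype.ext (funext ?_)⟩
  rintro (t | _)
  exacts [congrFun (congrArg Subtype.val hg) t, hs]

theorem exists_inlHom_comp_eq {S T : FIObj} (f : S ⟶ T)
    (h : Fintype.card S.α < Fintype.card T.α) : ∃ g : plusOne.obj S ⟶ T, inlHom S ≫ g = f := by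
  obtain ⟨t, ht⟩ : ∃ t, ∀ s, f.1 s ≠ t := by
    by_contra! hf
    exact h.not_ge (Fintype.card_le_of_surjective f.1 hf)
  exact ⟨⟨Sum.elim f.1 fun _ => t,
    f.2.sumElim (Function.injective_of_subsingleton _) fun s _ => ht s⟩, rfl⟩

/-- The exchange of the two points that `plusOne ⋙ plusOne` adds. -/
def plusOneSwap : plusOne ⋙ plusOne ≅ plusOne ⋙ plusOne :=
  NatIso.ofComponents
    (fun S => isoOfEquiv (S := plusOne.obj (plusOne.obj S)) (T := plusOne.obj (plusOne.obj S))
      ((Equiv.sumAssoc S.α PUnit PUnit).trans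
        (((Equiv.refl S.α).sumCongr (Equiv.sumComm PUnit PUnit)).trans
          (Equiv.sumAssoc S.α PUnit PUnit).symm)))
    fun f => by
      apply Subtype.ext
      funext x
      rcases x with (s | s) | s <;> rfl

theorem plusOne_map_inlHom_comp_plusOneSwap_hom (S : FIObj) :
    plusOne.map (inlHom S) ≫ plusOneSwap.hom.app S = inlHom (plusOne.obj S) := by
  apply Subtype.ext
  funext x
  rcases x with s | s <;> rfl

end FIObj

/-! ### Generators -/

namespace FIMod

/-- The elements `m i ∈ M (S i)` generate `M`: their images span every `M T`. -/
def Generates {M : FIMod} {ι : Type*} {S : ι → FIObj} (m : ∀ i, M.obj (S i)) : Prop :=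
  ∀ T, Submodule.span ℂ (Set.range fun g : Σ i, (S i ⟶ T) => M.map g.2 (m g.1)) = ⊤

/-- `M` is generated by finitely many elements, all of degree less than `d`. -/
def GeneratedBelow (d : ℕ) (M : FIMod) : Prop :=
  ∃ (ι : Type) (_ : Finite ι) (S : ι → FIObj) (m : ∀ i, M.obj (S i)),
    (∀ i, Fintype.card (S i).α < d) ∧ Generates m

/-- The sub-FI-module generated by a family of elements. -/
def spanSub {M : FIMod} {ι : Type*} {S : ι → FIObj} (m : ∀ i, M.obj (S i)) : FISub M where
  carrier T := Submodule.span ℂ (Set.range fun g : Σ i, (S i ⟶ T) => M.map g.2 (m g.1))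
  map_mem {T U} f x hx := by
    refine (Submodule.span_le (p := (Submodule.span ℂ _).comap (M.map f).hom)).2 ?_ hx
    rintro _ ⟨⟨i, g⟩, rfl⟩
    exact Submodule.subset_span ⟨⟨i, g ≫ f⟩, by simp⟩

theorem mem_spanSub {M : FIMod} {ι : Type*} {S : ι → FIObj} (m : ∀ i, M.obj (S i)) (i : ι) :
    m i ∈ (spanSub m).carrier (S i) :=
  Submodule.subset_span ⟨⟨i, 𝟙 _⟩, by simp⟩

theorem FG.exists_generatedBelow {M : FIMod} (hM : FG M) : ∃ d, GeneratedBelow d M := by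
  obtain ⟨k, S, m, hm⟩ := hM
  obtain ⟨d, hd⟩ := (Set.finite_range fun i => Fintype.card (S i).α).bddAbove
  exact ⟨d + 1, Fin k, inferInstance, S, m, fun i => Nat.lt_succ_of_le (hd ⟨i, rfl⟩),
    hm (spanSub m) (mem_spanSub m)⟩

theorem GeneratedBelow.isZero {M : FIMod} (hM : GeneratedBelow 0 M) : IsZero M := by
  obtain ⟨ι, _, S, m, h_card, hm⟩ := hM
  have : IsEmpty ι := ⟨fun i => Nat.not_lt_zero _ (h_card i)⟩
  refine (Functor.isZero_iff M).2 fun T => ?_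
  have h_bot_top : (⊥ : Submodule ℂ (M.obj T)) = ⊤ := by
    rw [← hm T, Set.range_eq_empty, Submodule.span_empty]
  have := (Submodule.subsingleton_iff ℂ).1 (subsingleton_of_bot_eq_top h_bot_top)
  exact ModuleCat.isZero_of_subsingleton _

/-- The derivative of `M`: the cokernel of `ι_M : M → Sh M`. -/
abbrev derivative (M : FIMod) : FIMod := cokernel (shiftUnit.app M)

/-- The component at `T` of the projection `Sh M → derivative M`. -/
def derivativeπ (M : FIMod) (T : FIObj) : M.obj (plusOne.obj T) ⟶ (derivative M).obj T :=
  (cokernel.π (shiftUnit.app M)).app T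

theorem derivativeπ_surjective (M : FIMod) (T : FIObj) : Function.Surjective (derivativeπ M T) :=
  (ModuleCat.epi_iff_surjective ((cokernel.π (shiftUnit.app M)).app T)).1 inferInstance

theorem map_plusOne_comp_derivativeπ (M : FIMod) {S T : FIObj} (f : S ⟶ T) :
    M.map (plusOne.map f) ≫ derivativeπ M T = derivativeπ M S ≫ (derivative M).map f :=
  (cokernel.π (shiftUnit.app M)).naturality f

theorem map_inlHom_comp_derivativeπ (M : FIMod) (T : FIObj) :
    M.map (inlHom T) ≫ derivativeπ M T = 0 :=
  congrArg (fun φ => NatTrans.app φ T) (cokernel.condition (shiftUnit.app M))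

theorem GeneratedBelow.derivative {d : ℕ} {M : FIMod} (hM : GeneratedBelow (d + 1) M) :
    GeneratedBelow d (derivative M) := by
  obtain ⟨ι, _, S, m, h_card, hm⟩ := hM
  refine ⟨Σ i, (S i).α, inferInstance, fun a => (S a.1).erase a.2,
    fun a => derivativeπ M _ (M.map ((S a.1).plusOneEraseIso a.2).inv (m a.1)), fun a =>
      (FIObj.card_erase_lt _ _).trans_le (Nat.le_of_lt_succ (h_card a.1)), fun T => ?_⟩
  rw [eq_top_iff, ← (LinearMap.range_eq_top (f := (derivativeπ M T).hom)).2
    (derivativeπ_surjective M T), LinearMap.range_eq_map, ← hm, Submodule.map_span,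
    Submodule.span_le]
  rintro _ ⟨_, ⟨⟨i, f⟩, rfl⟩, rfl⟩
  by_cases hf : ∃ s, f.1 s = Sum.inr PUnit.unit
  · obtain ⟨s, hs⟩ := hf
    obtain ⟨g, hg⟩ := FIObj.exists_plusOneEraseIso_hom_comp_eq f hs
    refine Submodule.subset_span ⟨⟨⟨i, s⟩, g⟩, ?_⟩
    have hfg : f = ((S i).plusOneEraseIso s).inv ≫ plusOne.map g := by
      rw [← hg, Iso.inv_hom_id_assoc]
    have := ConcreteCategory.congr_hom (map_plusOne_comp_derivativeπ M g)
      (M.map ((S i).plusOneEraseIso s).inv (m i))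
    simpa [hfg] using this.symm
  · obtain ⟨g, rfl⟩ := FIObj.exists_eq_comp_inlHom f (not_exists.1 hf)
    have := ConcreteCategory.congr_hom (map_inlHom_comp_derivativeπ M T) (M.map g (m i))
    have h_zero : derivativeπ M T (M.map (g ≫ inlHom T) (m i)) = 0 := by simpa using this
    exact h_zero ▸ zero_mem _

/-! ### Torsion is bounded -/

theorem map_eq_zero_of_map_inlHom_eq_zero {M : FIMod} {S T : FIObj} {x : M.obj S}
    (hx : M.map (inlHom S) x = 0) (h : Fintype.card S.α < Fintype.card T.α) (f : S ⟶ T) :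
    M.map f x = 0 := by
  obtain ⟨g, rfl⟩ := FIObj.exists_inlHom_comp_eq f h
  simp [hx]

/-- `ι_M : M → Sh M` is injective in all degrees at least `N`. -/
def TorsionFreeFrom (N : ℕ) (M : FIMod) : Prop :=
  ∀ T : FIObj, N ≤ Fintype.card T.α → Mono ((shiftUnit.app M).app T)

section Monomials

variable {M : FIMod} {ι : Type*} {S : ι → FIObj} (m : ∀ i, M.obj (S i))

/-- The image of a monomial in `M` when the generators of the free FI-module are sent to `m`. -/
def evalMonomial (n : ℕ) (b : FIMonomial (fun i => (S i).α) n) : M.obj (FIObj.of (Fin n)) :=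
  M.map (Y := FIObj.of (Fin n)) ⟨b.2, b.2.injective⟩ (m b.1)

/-- An order-preserving injection as a morphism of FI. -/
def orderHom {n n' : ℕ} (g : Fin n ↪o Fin n') : FIObj.of (Fin n) ⟶ FIObj.of (Fin n') :=
  ⟨g, g.injective⟩

theorem map_orderHom_evalMonomial {n n' : ℕ} (g : Fin n ↪o Fin n')
    (b : FIMonomial (fun i => (S i).α) n) :
    M.map (orderHom g) (evalMonomial m n b) = evalMonomial m n' (b.map g) :=
  (ConcreteCategory.congr_hom (M.map_comp _ (orderHom g)) (m b.1)).symm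

variable {m}

theorem Generates.span_range_evalMonomial (hm : Generates m) (n : ℕ) :
    Submodule.span ℂ (Set.range (evalMonomial m n)) = ⊤ := by
  rw [eq_top_iff, ← hm]
  refine Submodule.span_mono ?_
  rintro _ ⟨⟨i, f⟩, rfl⟩
  exact ⟨⟨i, f.1, f.2⟩, rfl⟩

variable [LinearOrder ι] [∀ i, LinearOrder (S i).α]

theorem map_orderHom_mem_span_evalMonomial_Iio {n n' : ℕ} (g : Fin n ↪o Fin n')
    {b : FIMonomial (fun i => (S i).α) n} {y : M.obj (FIObj.of (Fin n))}
    (hy : y ∈ Submodule.span ℂ (evalMonomial m n '' Set.Iio b)) :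
    M.map (orderHom g) y ∈ Submodule.span ℂ (evalMonomial m n' '' Set.Iio (b.map g)) := by
  refine (Submodule.span_le (p := (Submodule.span ℂ _).comap (M.map (orderHom g)).hom)).2 ?_ hy
  rintro _ ⟨a, hab, rfl⟩
  exact Submodule.subset_span
    ⟨a.map g, FIMonomial.map_strictMono g hab, (map_orderHom_evalMonomial m g a).symm⟩

theorem evalMonomial_map_mem_span_Iio {n n' : ℕ} {g : Fin n ↪o Fin n'}
    {b : FIMonomial (fun i => (S i).α) n} {x : M.obj (FIObj.of (Fin n))} {c : ℂ} (hc : c ≠ 0)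
    (hxb : x - c • evalMonomial m n b ∈ Submodule.span ℂ (evalMonomial m n '' Set.Iio b))
    (hx : M.map (orderHom g) x = 0) :
    evalMonomial m n' (b.map g) ∈
      Submodule.span ℂ (evalMonomial m n' '' Set.Iio (b.map g)) := by
  have h := map_orderHom_mem_span_evalMonomial_Iio g hxb
  rw [map_sub, map_smul, hx, map_orderHom_evalMonomial, zero_sub, Submodule.neg_mem_iff] at h
  exact (Submodule.smul_mem_iff _ hc).1 h

end Monomials

theorem Generates.exists_forall_mono_app_fin {M : FIMod} {ι : Type*} [Finite ι] {S : ι → FIObj}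
    {m : ∀ i, M.obj (S i)} (hm : Generates m) :
    ∃ N, ∀ n ≥ N, Mono ((shiftUnit.app M).app (FIObj.of (Fin n))) := by
  classical
  let _ : LinearOrder ι := linearOrderOfSTO WellOrderingRel
  let _ (i : ι) : LinearOrder (S i).α := linearOrderOfSTO WellOrderingRel
  by_contra! h_not_mono
  obtain ⟨φ, hφ, h_not_mono⟩ := Nat.exists_strictMono_subsequence fun N =>
    let ⟨n, hn, h⟩ := h_not_mono (N + 1)
    ⟨n, hn, h⟩
  have h_torsion (k : ℕ) :
      ∃ x : M.obj (FIObj.of (Fin (φ k))), M.map (inlHom _) x = 0 ∧ x ≠ 0 := by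
    have h := h_not_mono k
    rw [ModuleCat.mono_iff_injective, injective_iff_map_eq_zero] at h
    push Not at h
    exact h
  choose x hx hx_ne using h_torsion
  choose b hb c hc hxb using fun k => exists_leading_term (K := ℂ) (hx_ne k)
    (v := evalMonomial m (φ k)) (by rw [hm.span_range_evalMonomial]; trivial)
  obtain ⟨p, q, hpq, g, hg⟩ := FIMonomial.wellQuasiOrdered_divides fun k => ⟨φ k, b k⟩
  have hgx : M.map (orderHom g) (x p) = 0 :=
    map_eq_zero_of_map_inlHom_eq_zero (hx p)
      ((Fintype.card_fin _).trans_lt ((hφ hpq).trans_eq (Fintype.card_fin _).symm)) _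
  have h_mem := evalMonomial_map_mem_span_Iio (hc p) (hxb p) hgx
  exact hb q (by rwa [← hg] at h_mem)

theorem GeneratedBelow.exists_torsionFreeFrom {d : ℕ} {M : FIMod} (hM : GeneratedBelow d M) :
    ∃ N, TorsionFreeFrom N M := by
  obtain ⟨ι, _, S, m, -, hm⟩ := hM
  obtain ⟨N, hN⟩ := hm.exists_forall_mono_app_fin
  refine ⟨N, fun T hT => ?_⟩
  let e : T ≅ FIObj.of (Fin (Fintype.card T.α)) := FIObj.isoOfEquiv (Fintype.equivFin T.α)
  have := hN _ hT
  have h_comp : Mono ((shiftUnit.app M).app T ≫ (Sh.obj M).map e.hom) := by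
    rw [← (shiftUnit.app M).naturality]
    exact mono_comp (M.map e.hom) _
  exact mono_of_mono _ ((Sh.obj M).map e.hom)

/-! ### The shift and the derivative -/

/-- The involution of `Sh (Sh M)` exchanging the two added points. -/
def shSwap (M : FIMod) : Sh.obj (Sh.obj M) ≅ Sh.obj (Sh.obj M) :=
  Functor.isoWhiskerRight FIObj.plusOneSwap M

theorem shiftUnit_comp_shSwap_hom (M : FIMod) :
    shiftUnit.app (Sh.obj M) ≫ (shSwap M).hom = Sh.map (shiftUnit.app M) := by
  apply NatTrans.ext
  funext S
  exact (M.map_comp _ _).symm.trans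
    (congrArg M.map (FIObj.plusOne_map_inlHom_comp_plusOneSwap_hom S))

instance : PreservesFiniteLimits Sh where
  preservesFiniteLimits J _ _ := by unfold Sh; infer_instance

instance : PreservesFiniteColimits Sh where
  preservesFiniteColimits J _ _ := by unfold Sh; infer_instance

/-- The shift commutes with the derivative. -/
def derivativeShIso (M : FIMod) : derivative (Sh.obj M) ≅ Sh.obj (derivative M) :=
  cokernel.mapIso _ _ (Iso.refl _) (shSwap M)
    ((shiftUnit_comp_shSwap_hom M).trans (Category.id_comp _).symm) ≪≫
    (PreservesCokernel.iso Sh (shiftUnit.app M)).symm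

theorem nonempty_derivative_sh_iterate_iso (M : FIMod) (n : ℕ) :
    Nonempty (derivative (Sh.obj^[n] M) ≅ Sh.obj^[n] (derivative M)) := by
  induction n with
  | zero => exact ⟨Iso.refl _⟩
  | succ n ih =>
    obtain ⟨e⟩ := ih
    rw [Function.iterate_succ_apply', Function.iterate_succ_apply']
    exact ⟨derivativeShIso _ ≪≫ Sh.mapIso e⟩

theorem TorsionFreeFrom.sh {N : ℕ} {M : FIMod} (hM : TorsionFreeFrom N M) :
    TorsionFreeFrom (N - 1) (Sh.obj M) := fun T hT =>
  have : Mono ((Sh.map (shiftUnit.app M)).app T) := hM (plusOne.obj T) (by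
    have : Fintype.card (plusOne.obj T).α = Fintype.card T.α + 1 := Fintype.card_sum
    omega)
  mono_of_mono_fac (congrArg (fun φ => NatTrans.app φ T) (shiftUnit_comp_shSwap_hom M))

theorem TorsionFreeFrom.sh_iterate {N : ℕ} {M : FIMod} (hM : TorsionFreeFrom N M) (n : ℕ) :
    TorsionFreeFrom (N - n) (Sh.obj^[n] M) := by
  induction n with
  | zero => exact hM
  | succ n ih =>
    rw [Function.iterate_succ_apply', ← Nat.sub_sub]
    exact ih.sh

theorem TorsionFreeFrom.mono_shiftUnit {M : FIMod} (hM : TorsionFreeFrom 0 M) :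
    Mono (shiftUnit.app M) :=
  have (T : FIObj) : Mono ((shiftUnit.app M).app T) := hM T (Nat.zero_le _)
  NatTrans.mono_of_mono_app _

end FIMod

/-! ### Mapping cones -/

section MappingCone

variable {𝒜 : Type*} [Category* 𝒜] [Abelian 𝒜]

open CochainComplex in
theorem quasiIso_mappingCone_map {K₁ L₁ K₂ L₂ : CochainComplex 𝒜 ℤ} (φ₁ : K₁ ⟶ L₁)
    (φ₂ : K₂ ⟶ L₂) (a : K₁ ⟶ K₂) (b : L₁ ⟶ L₂) (comm : φ₁ ≫ b = a ≫ φ₂) [QuasiIso a]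
    [QuasiIso b] : QuasiIso (mappingCone.map φ₁ φ₂ a b comm) := by
  let _ : HasDerivedCategory 𝒜 := HasDerivedCategory.standard 𝒜
  rw [← DerivedCategory.isIso_Q_map_iff_quasiIso]
  exact Pretriangulated.isIso₃_of_isIso₁₂
    (DerivedCategory.Q.mapTriangle.map (mappingCone.triangleMap φ₁ φ₂ a b comm))
    (DerivedCategory.mappingCone_triangle_distinguished φ₁)
    (DerivedCategory.mappingCone_triangle_distinguished φ₂)
    (inferInstanceAs (IsIso (DerivedCategory.Q.map a)))
    (inferInstanceAs (IsIso (DerivedCategory.Q.map b)))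

theorem exists_quasiIso_mappingCone_single_map {X Y : 𝒜} (f : X ⟶ Y) [Mono f] (n : ℤ) :
    ∃ ψ : CochainComplex.mappingCone ((HomologicalComplex.single 𝒜 (.up ℤ) n).map f) ⟶
      (HomologicalComplex.single 𝒜 (.up ℤ) n).obj (cokernel f), QuasiIso ψ := by
  have hf : (ShortComplex.mk f (cokernel.π f) (cokernel.condition f)).ShortExact :=
    { exact := ShortComplex.exact_cokernel f }
  exact ⟨_, CochainComplex.mappingCone.quasiIso_descShortComplex
    (hf.map_of_exact (HomologicalComplex.single 𝒜 (.up ℤ) n))⟩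

end MappingCone

theorem iotaCx_naturality {C D : FICx} (φ : C ⟶ D) : iotaCx C ≫ ShCx.map φ = φ ≫ iotaCx D := by
  ext1 i
  exact (shiftUnit.naturality (φ.f i)).symm

theorem exists_quasiIso_del {C D : FICx} (φ : C ⟶ D) [QuasiIso φ] :
    ∃ ψ : del C ⟶ del D, QuasiIso ψ :=
  have : QuasiIso (ShCx.map φ) := HomologicalComplex.quasiIso_map_of_preservesHomology φ Sh
  ⟨_, quasiIso_mappingCone_map _ _ φ (ShCx.map φ) (iotaCx_naturality φ)⟩

theorem acyclic_del_iterate_of_quasiIso {C D : FICx} (φ : C ⟶ D) [QuasiIso φ] {n : ℕ}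
    (hD : (del^[n] D).Acyclic) : (del^[n] C).Acyclic := by
  induction n generalizing C D with
  | zero => exact fun i => (exactAt_iff_of_quasiIsoAt φ i).2 (hD i)
  | succ n ih =>
    obtain ⟨ψ, _⟩ := exists_quasiIso_del φ
    exact ih ψ hD

/-- An FI-module as a complex concentrated in degree `0`. -/
abbrev single₀ : FIMod ⥤ FICx := HomologicalComplex.single FIMod (ComplexShape.up ℤ) 0

/-- The shift of a module in degree `0` is the shifted module in degree `0`. -/
def shCxSingleIso (M : FIMod) : ShCx.obj (single₀.obj M) ≅ single₀.obj (Sh.obj M) :=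
  (HomologicalComplex.singleMapHomologicalComplex Sh (ComplexShape.up ℤ) 0).app M

theorem iotaCx_single_comp_shCxSingleIso_hom (M : FIMod) :
    iotaCx (single₀.obj M) ≫ (shCxSingleIso M).hom = single₀.map (shiftUnit.app M) := by
  apply HomologicalComplex.from_single_hom_ext
  have h_hom : (shCxSingleIso M).hom.f 0 = _ :=
    HomologicalComplex.singleMapHomologicalComplex_hom_app_self _ _ _ _
  rw [HomologicalComplex.comp_f, h_hom, HomologicalComplex.single_map_f_self]
  exact (shiftUnit.naturality_assoc _ _).symm

theorem exists_quasiIso_del_single (M : FIMod) [Mono (shiftUnit.app M)] :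
    ∃ ψ : del (single₀.obj M) ⟶ single₀.obj M.derivative, QuasiIso ψ := by
  obtain ⟨ψ, _⟩ := exists_quasiIso_mappingCone_single_map (shiftUnit.app M) 0
  have comm : iotaCx (single₀.obj M) ≫ (shCxSingleIso M).hom =
      𝟙 (single₀.obj M) ≫ single₀.map (shiftUnit.app M) := by
    exact (iotaCx_single_comp_shCxSingleIso_hom M).trans (Category.id_comp _).symm
  let χ := CochainComplex.mappingCone.map _ _ _ _ comm
  have : QuasiIso χ := quasiIso_mappingCone_map _ _ _ _ comm
  exact ⟨χ ≫ ψ, quasiIso_comp χ ψ⟩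

theorem FIMod.GeneratedBelow.exists_forall_acyclic_del_iterate {d : ℕ} {M : FIMod}
    (hM : GeneratedBelow d M) :
    ∃ N, ∀ n ≥ N, (del^[d] (single₀.obj (Sh.obj^[n] M))).Acyclic := by
  induction d generalizing M with
  | zero =>
    have hzero (n : ℕ) : IsZero (Sh.obj^[n] M) :=
      Function.Iterate.rec IsZero hM.isZero (fun _ => Sh.map_isZero) n
    exact ⟨0, fun n _ => HomologicalComplex.acyclic_of_isZero _ (single₀.map_isZero (hzero n))⟩
  | succ d ih =>
    obtain ⟨N₁, hN₁⟩ := ih hM.derivative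
    obtain ⟨N₂, hN₂⟩ := hM.exists_torsionFreeFrom
    refine ⟨max N₁ N₂, fun n hn => ?_⟩
    have : Mono (shiftUnit.app (Sh.obj^[n] M)) :=
      (Nat.sub_eq_zero_of_le (le_of_max_le_right hn) ▸ hN₂.sh_iterate n).mono_shiftUnit
    obtain ⟨ψ, _⟩ := exists_quasiIso_del_single (Sh.obj^[n] M)
    obtain ⟨e⟩ := nonempty_derivative_sh_iterate_iso M n
    exact acyclic_del_iterate_of_quasiIso (ψ ≫ single₀.map e.hom)
      (hN₁ n (le_of_max_le_left hn))

/-- For every finitely generated FI-module M, regarded as a complex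
concentrated in degree 0, there are n₁, n₂ ≥ 0 such that ∂^{n₁}(Sh^{n₂} M) is exact,
i.e. vanishes in the bounded derived category. -/
theorem fg_FIMod_differential_equation (M : FIMod) (hM : FIMod.FG M) :
    ∃ n₁ n₂ : ℕ, ∀ i : ℤ,
      (del^[n₁]
        ((HomologicalComplex.single FIMod (ComplexShape.up ℤ) 0).obj
          ((Sh.obj)^[n₂] M))).ExactAt i := by
  obtain ⟨d, hd⟩ := FIMod.FG.exists_generatedBelow hM
  obtain ⟨N, hN⟩ := hd.exists_forall_acyclic_del_iterate
  exact ⟨d, N, hN N le_rfl⟩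

end
end

section
/- Let I be an FI-module over ℂ of finite length, i.e. each I(S) is finite-dimensional and I(S) = 0 whenever |S| is sufficiently large, and suppose I is injective in the category of finite-length FI-modules: every morphism into I from a finite-length FI-module X extends along any pointwise-injective morphism from X into a finite-length FI-module Y. Then I is injective in the category of finitely generated FI-modules: for every morphism i : X → Y of finitely generated FI-modules with each i_S injective and every morphism f : X → I, there exists g : Y → I with g ∘ i = f. -/
open CategoryTheory

/-- Finite length FI-modules: pointwise finite dimensional and vanishing on all
sufficiently large finite sets. -/
def FIMod.FiniteLength (M : FIMod) : Prop :=
  (∀ S : FIObj, FiniteDimensional ℂ (M.obj S)) ∧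
    ∃ N : ℕ, ∀ S : FIObj, N ≤ Fintype.card S.α → ∀ x : (M.obj S), x = 0

/-!
Suppose `I` vanishes on sets of size at least `n`. The elements of `Y` of degree at least `n` form a
sub-FI-module `N`, and `Y ⧸ N` has finite length as soon as `Y` is pointwise finite-dimensional,
which finite generation guarantees. If `i : X ⟶ Y` is pointwise injective, any `f : X ⟶ I` kills
`i⁻¹ N`: below degree `n` this preimage is zero, and from degree `n` on `I` is. So `f` factors
through `X ⧸ i⁻¹ N`, which embeds in `Y ⧸ N`, and the extension problem becomes one between
finite-length FI-modules.
-/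

namespace FISub

variable {M P X Y : FIMod}

/-- The quotient of an FI-module by a sub-FI-module, formed pointwise. -/
def quotient (N : FISub M) : FIMod where
  obj S := ModuleCat.of ℂ (M.obj S ⧸ N.carrier S)
  map {S T} f := ModuleCat.ofHom
    ((N.carrier S).mapQ (N.carrier T) (M.map f).hom fun x hx => N.map_mem f x hx)
  map_id S := by ext; simp
  map_comp f g := by ext; simp

/-- The projection of an FI-module onto its quotient by a sub-FI-module. -/
def mkQ (N : FISub M) : M ⟶ N.quotient where
  app S := ModuleCat.ofHom (N.carrier S).mkQ

/-- The factorization through `N.quotient` of a morphism that vanishes on `N`. -/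
def liftQ (N : FISub M) (f : M ⟶ P) (hf : ∀ S, ∀ x ∈ N.carrier S, f.app S x = 0) :
    N.quotient ⟶ P where
  app S := ModuleCat.ofHom ((N.carrier S).liftQ (f.app S).hom (hf S))
  naturality S T g := by
    ext q
    obtain ⟨x, rfl⟩ := Submodule.Quotient.mk_surjective _ q
    exact NatTrans.naturality_apply f g x

theorem mkQ_comp_liftQ (N : FISub M) (f : M ⟶ P)
    (hf : ∀ S, ∀ x ∈ N.carrier S, f.app S x = 0) : N.mkQ ≫ N.liftQ f hf = f := by
  ext S x
  rfl

/-- The preimage of a sub-FI-module under a morphism. -/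
def comap (i : X ⟶ Y) (N : FISub Y) : FISub X where
  carrier S := (N.carrier S).comap (i.app S).hom
  map_mem g x hx := by
    have hgx : i.app _ (X.map g x) = Y.map g (i.app _ x) := NatTrans.naturality_apply i g x
    exact Submodule.mem_comap.2 (hgx ▸ N.map_mem g _ hx)

/-- The morphism `X ⧸ i⁻¹ N ⟶ Y ⧸ N` induced by `i : X ⟶ Y`. -/
def comapQ (i : X ⟶ Y) (N : FISub Y) : (N.comap i).quotient ⟶ N.quotient :=
  (N.comap i).liftQ (i ≫ N.mkQ) fun S _ hx => (Submodule.Quotient.mk_eq_zero (N.carrier S)).2 hx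

theorem mkQ_comp_comapQ (i : X ⟶ Y) (N : FISub Y) :
    (N.comap i).mkQ ≫ N.comapQ i = i ≫ N.mkQ :=
  mkQ_comp_liftQ _ _ _

theorem comapQ_app_injective (i : X ⟶ Y) (N : FISub Y) (S : FIObj) :
    Function.Injective ((N.comapQ i).app S) := by
  refine (injective_iff_map_eq_zero ((N.comapQ i).app S).hom).2 fun q hq => ?_
  obtain ⟨x, rfl⟩ := Submodule.Quotient.mk_surjective _ q
  have hx : i.app S x ∈ N.carrier S := (Submodule.Quotient.mk_eq_zero _).1 hq
  exact (Submodule.Quotient.mk_eq_zero _).2 hx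

/-- The sub-FI-module generated by a family of elements `m j ∈ M (S j)`. -/
def span {ι : Type*} {S : ι → FIObj} (m : ∀ j, M.obj (S j)) : FISub M where
  carrier T := Submodule.span ℂ (Set.range fun p : Σ j, S j ⟶ T => M.map p.2 (m p.1))
  map_mem {T U} f := by
    suffices h : Submodule.span ℂ _ ≤ (Submodule.span ℂ _).comap (M.map f).hom from
      fun x hx => h hx
    refine Submodule.span_le.2 ?_
    rintro _ ⟨⟨j, g⟩, rfl⟩
    exact Submodule.subset_span ⟨⟨j, g ≫ f⟩, by simp⟩

theorem mem_span {ι : Type*} {S : ι → FIObj} (m : ∀ j, M.obj (S j)) (j : ι) :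
    m j ∈ (span m).carrier (S j) :=
  Submodule.subset_span ⟨⟨j, 𝟙 _⟩, by simp⟩

end FISub

theorem FIObj.card_le_of_hom {S T : FIObj} (f : S ⟶ T) :
    Fintype.card S.α ≤ Fintype.card T.α :=
  Fintype.card_le_of_injective f.1 f.2

instance FIObj.finite_hom (S T : FIObj) : Finite (S ⟶ T) :=
  inferInstanceAs (Finite {f : S.α → T.α // Function.Injective f})

namespace FIMod

variable {X Y : FIMod}

theorem FG.finiteDimensional_obj {M : FIMod} (hM : M.FG) (T : FIObj) :
    FiniteDimensional ℂ (M.obj T) := by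
  obtain ⟨k, S, m, hm⟩ := hM
  have span_eq_top : (FISub.span m).carrier T = ⊤ := hm _ (FISub.mem_span m) T
  exact ⟨span_eq_top ▸ Submodule.fg_span (Set.finite_range _)⟩

theorem FiniteLength.of_injective (hY : Y.FiniteLength) (i : X ⟶ Y)
    (hi : ∀ S, Function.Injective (i.app S)) : X.FiniteLength := by
  obtain ⟨finDim, n, hn⟩ := hY
  refine ⟨fun S => ?_, n, fun S hS x => hi S ?_⟩
  · have := finDim S
    exact Module.Finite.of_injective (i.app S).hom (hi S)
  · rw [hn S hS (i.app S x), map_zero]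

/-- The sub-FI-module of `M` that agrees with `M` on sets of size at least `n` and is zero on
smaller sets. -/
def degreeGE (M : FIMod) (n : ℕ) : FISub M where
  carrier S := ⨅ _ : Fintype.card S.α < n, ⊥
  map_mem f x hx := by
    simp only [Submodule.mem_iInf, Submodule.mem_bot] at hx ⊢
    intro hT
    rw [hx ((FIObj.card_le_of_hom f).trans_lt hT), map_zero]

theorem mem_degreeGE {M : FIMod} {n : ℕ} {S : FIObj} {x : M.obj S} :
    x ∈ (M.degreeGE n).carrier S ↔ (Fintype.card S.α < n → x = 0) := by
  simp only [degreeGE, Submodule.mem_iInf, Submodule.mem_bot]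

theorem finiteLength_quotient_degreeGE {M : FIMod}
    (hM : ∀ S, FiniteDimensional ℂ (M.obj S)) (n : ℕ) :
    (M.degreeGE n).quotient.FiniteLength := by
  refine ⟨fun S => ?_, n, fun S hS q => ?_⟩
  · have := hM S
    exact inferInstanceAs (FiniteDimensional ℂ (M.obj S ⧸ (M.degreeGE n).carrier S))
  · obtain ⟨x, rfl⟩ := Submodule.Quotient.mk_surjective _ q
    exact (Submodule.Quotient.mk_eq_zero _).2 (mem_degreeGE.2 fun hlt => absurd hS hlt.not_ge)

theorem app_eq_zero_of_mem_comap_degreeGE {I : FIMod} {n : ℕ}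
    (hI : ∀ S : FIObj, n ≤ Fintype.card S.α → ∀ x : I.obj S, x = 0) (i : X ⟶ Y)
    (hi : ∀ S, Function.Injective (i.app S)) (f : X ⟶ I) (S : FIObj) (x : X.obj S)
    (hx : x ∈ ((Y.degreeGE n).comap i).carrier S) : f.app S x = 0 := by
  rcases lt_or_ge (Fintype.card S.α) n with hlt | hge
  · have hix : i.app S x = 0 := mem_degreeGE.1 hx hlt
    have hx0 : x = 0 := hi S (hix.trans (map_zero _).symm)
    rw [hx0, map_zero]
  · exact hI S hge _

end FIMod

theorem finite_length_injective_is_injective_in_fg_general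
    {I : FIMod} {n : ℕ} (hI : ∀ S : FIObj, n ≤ Fintype.card S.α → ∀ x : I.obj S, x = 0)
    (hinj : ∀ (X Y : FIMod), FIMod.FiniteLength X → FIMod.FiniteLength Y →
      ∀ (i : X ⟶ Y), (∀ S : FIObj, Function.Injective (i.app S)) →
        ∀ f : X ⟶ I, ∃ g : Y ⟶ I, i ≫ g = f)
    {X Y : FIMod} (hY : ∀ S, FiniteDimensional ℂ (Y.obj S)) (i : X ⟶ Y)
    (hi : ∀ S : FIObj, Function.Injective (i.app S)) (f : X ⟶ I) :
    ∃ g : Y ⟶ I, i ≫ g = f := by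
  let N := Y.degreeGE n
  have hYN : N.quotient.FiniteLength := FIMod.finiteLength_quotient_degreeGE hY n
  have hXN : (N.comap i).quotient.FiniteLength :=
    hYN.of_injective (N.comapQ i) (N.comapQ_app_injective i)
  let fbar : (N.comap i).quotient ⟶ I :=
    (N.comap i).liftQ f (FIMod.app_eq_zero_of_mem_comap_degreeGE hI i hi f)
  obtain ⟨g, hg⟩ := hinj _ _ hXN hYN (N.comapQ i) (N.comapQ_app_injective i) fbar
  refine ⟨N.mkQ ≫ g, ?_⟩
  calc
    i ≫ N.mkQ ≫ g = (N.comap i).mkQ ≫ N.comapQ i ≫ g := by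
      rw [← Category.assoc, ← N.mkQ_comp_comapQ i, Category.assoc]
    _ = (N.comap i).mkQ ≫ fbar := by rw [hg]
    _ = f := (N.comap i).mkQ_comp_liftQ f _

/-- A finite length FI-module that is injective in the category of
finite length FI-modules is injective in the category of finitely generated FI-modules. -/
theorem finite_length_injective_is_injective_in_fg
    (I : FIMod) (hlen : FIMod.FiniteLength I)
    (hinj : ∀ (X Y : FIMod), FIMod.FiniteLength X → FIMod.FiniteLength Y →
      ∀ (i : X ⟶ Y), (∀ S : FIObj, Function.Injective (i.app S)) →
        ∀ f : X ⟶ I, ∃ g : Y ⟶ I, i ≫ g = f) :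
    ∀ (X Y : FIMod), FIMod.FG X → FIMod.FG Y →
      ∀ (i : X ⟶ Y), (∀ S : FIObj, Function.Injective (i.app S)) →
        ∀ f : X ⟶ I, ∃ g : Y ⟶ I, i ≫ g = f := by
  obtain ⟨-, n, hn⟩ := hlen
  intro X Y _ hY i hi f
  exact finite_length_injective_is_injective_in_fg_general hn hinj hY.finiteDimensional_obj i hi f
end
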